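/- For every n ≥ 1, Σ_{P ∈ 𝒫_{n+1}} t^{pv(P)} = t · Π_{i=0}^{n−1} ((2i+1)·t + (n − i)) as polynomials in t, where 𝒫_{n+1} is the set of plane trees on [n+1]; in particular, setting t = 1 gives |𝒫_{n+1}| = (n+1)!·C_n, where C_n = (1/(n+1))·binom(2n,n) is the n-th Catalan number. -/

import Mathlib

/-- Labeled plane trees: a root label together with a linearly ordered list of subtrees. -/
inductive PT : Type
  | node (label : ℕ) (children : List PT) : PT

/-- The multiset of labels of a plane tree. -/
def PT.labels : PT → Multiset ℕ
  | .node a ch => a ::ₘ (ch.attach.map fun c => PT.labels c.1).sum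
decreasing_by
  have := List.sizeOf_lt_of_mem c.2
  simp only [PT.node.sizeOf_spec]
  omega

/-- The number of *proper* vertices of a plane tree: a vertex is proper if its label is
the smallest label in its descendant subtree (including itself). -/
def PT.pv : PT → ℕ
  | .node a ch =>
      (if ∀ b ∈ (ch.map PT.labels).sum, a ≤ b then 1 else 0)
        + (ch.attach.map fun c => PT.pv c.1).sum
decreasing_by
  have := List.sizeOf_lt_of_mem c.2
  simp only [PT.node.sizeOf_spec]
  omega

/-- `𝒫ℱ_n`: plane forests on `[n]`, i.e. sequences of (nonempty) plane trees whose
label sets are disjoint with union `[n] = {1,…,n}`. -/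
def PF (n : ℕ) : Type :=
  {l : List PT // (l.map PT.labels).sum = (Finset.Icc 1 n).val}

/-- The number of proper vertices of a plane forest. -/
def pvPF (l : List PT) : ℕ := (l.map PT.pv).sum

/-- `𝒫_{n+1}`: plane trees on `[n+1] = {1,…,n+1}`. -/
def PTn (m : ℕ) : Type := {P : PT // P.labels = (Finset.Icc 1 m).val}

/-- Labels of a forest. -/
def lab (l : List PT) : Multiset ℕ := (l.map PT.labels).sum

theorem labels_node (a : ℕ) (ch : List PT) : (PT.node a ch).labels = a ::ₘ lab ch := by
  rw [PT.labels, lab]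
  congr 2
  exact List.attach_map_val (l := ch) (f := PT.labels)

theorem pv_node (a : ℕ) (ch : List PT) :
    (PT.node a ch).pv = (if ∀ b ∈ lab ch, a ≤ b then 1 else 0) + pvPF ch := by
  rw [PT.pv, pvPF, lab]
  congr 2
  exact List.attach_map_val (l := ch) (f := PT.pv)

@[simp] theorem lab_nil : lab [] = 0 := rfl
@[simp] theorem lab_cons (a : PT) (l : List PT) : lab (a :: l) = a.labels + lab l := by simp [lab]
@[simp] theorem lab_append (l l' : List PT) : lab (l ++ l') = lab l + lab l' := by simp [lab]
@[simp] theorem pvPF_nil : pvPF [] = 0 := rfl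
@[simp] theorem pvPF_cons (a : PT) (l : List PT) : pvPF (a :: l) = a.pv + pvPF l := by simp [pvPF]
@[simp] theorem pvPF_append (l l' : List PT) : pvPF (l ++ l') = pvPF l + pvPF l' := by simp [pvPF]

theorem lab_eq_zero {l : List PT} (h : lab l = 0) : l = [] := by
  cases l with
  | nil => rfl
  | cons a l =>
    cases a with
    | node v c => simp [labels_node] at h

theorem mem_lab {l : List PT} {m : ℕ} : m ∈ lab l ↔ ∃ P ∈ l, m ∈ P.labels := by
  induction l with
  | nil => simp
  | cons a l ih => simp [ih]

/-- Finite set with given weighted sum. -/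
def Enum {α : Type} (s : Set α) (w : α → ℚ) (q : ℚ) : Prop :=
  s.Finite ∧ ∑ᶠ x ∈ s, w x = q

theorem Enum.image {α β : Type} {s : Set α} {w : α → ℚ} {q : ℚ} (h : Enum s w q)
    (f : α → β) (w' : β → ℚ) (hf : Set.InjOn f s) (hw : ∀ x ∈ s, w' (f x) = w x) :
    Enum (f '' s) w' q := by
  refine ⟨h.1.image f, ?_⟩
  rw [finsum_mem_image hf, ← h.2]
  exact finsum_mem_congr rfl hw

theorem Enum.union {α : Type} {s s' : Set α} {w : α → ℚ} {q q' : ℚ} (h : Enum s w q)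
    (h' : Enum s' w q') (hd : Disjoint s s') : Enum (s ∪ s') w (q + q') := by
  refine ⟨h.1.union h'.1, ?_⟩
  rw [finsum_mem_union hd h.1 h'.1, h.2, h'.2]

theorem Enum.biUnion {α ι : Type} (I : Finset ι) {s : ι → Set α} {w : α → ℚ} {q : ℚ}
    (h : ∀ i ∈ I, Enum (s i) w q) (hd : (I : Set ι).PairwiseDisjoint s) :
    Enum (⋃ i ∈ (I : Set ι), s i) w (I.card * q) := by
  refine ⟨I.finite_toSet.biUnion fun i hi => (h i hi).1, ?_⟩
  rw [finsum_mem_biUnion hd I.finite_toSet (fun i hi => (h i hi).1), finsum_mem_coe_finset,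
    Finset.sum_congr rfl (fun i hi => (h i hi).2)]
  simp

theorem Enum.smul {α : Type} {s : Set α} {w w' : α → ℚ} {q : ℚ} (h : Enum s w q) (c : ℚ)
    (hw : ∀ x ∈ s, w' x = c * w x) : Enum s w' (c * q) := by
  refine ⟨h.1, ?_⟩
  rw [finsum_mem_congr rfl hw, ← h.2, mul_finsum_mem w c]

def SA (S : Finset ℕ) (r : ℕ) : Set (Fin r → List PT) := {g | ∑ i, lab (g i) = S.val}

def SB (m : ℕ) (S : Finset ℕ) (r : ℕ) : Set (List PT × (Fin r → List PT)) :=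
  {p | m ∈ lab p.1 ∧ lab p.1 + ∑ i, lab (p.2 i) = S.val}

def SD (m : ℕ) (S : Finset ℕ) (r : ℕ) : Set (ℕ × List PT × (Fin r → List PT)) :=
  {p | m ∈ p.1 ::ₘ lab p.2.1 ∧ (p.1 ::ₘ lab p.2.1) + ∑ i, lab (p.2.2 i) = S.val}

def wA (t : ℚ) {r : ℕ} (g : Fin r → List PT) : ℚ := t ^ (∑ i, pvPF (g i))

def wB (t : ℚ) {r : ℕ} (p : List PT × (Fin r → List PT)) : ℚ :=
  t ^ (pvPF p.1 + ∑ i, pvPF (p.2 i))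

def wD (t : ℚ) {r : ℕ} (p : ℕ × List PT × (Fin r → List PT)) : ℚ :=
  t ^ ((PT.node p.1 p.2.1).pv + ∑ i, pvPF (p.2.2 i))

/-- The closed form for `SB` with `n + 1` labels. -/
def Bf (t : ℚ) (n r : ℕ) : ℚ :=
  t * ∏ i ∈ Finset.range n, ((2 * i + r + 3 : ℕ) * t + ((n - i : ℕ) : ℚ))

theorem enumA_empty (t : ℚ) (r : ℕ) : Enum (SA ∅ r) (wA t) 1 := by
  have : SA ∅ r = {fun _ => []} := by
    ext g
    simp only [SA, Set.mem_ofPred_eq, Finset.empty_val, Set.mem_singleton_iff]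
    constructor
    · intro h
      funext i
      apply lab_eq_zero
      rw [Finset.sum_eq_zero_iff] at h
      exact h i (Finset.mem_univ _)
    · rintro rfl; simp
  rw [this]
  exact ⟨Set.finite_singleton _, by simp [wA]⟩

theorem nodup_disj {S : Finset ℕ} {a b c : Multiset ℕ} {m : ℕ} (h : a + b + c = S.val)
    (ha : m ∈ a) (hb : m ∈ b) : False := by
  have h1 : (a + b).Nodup := (Multiset.nodup_add.1 (h ▸ S.nodup)).1
  exact Multiset.disjoint_left.1 (Multiset.nodup_add.1 h1).2.2 ha hb

theorem SA_eq (m : ℕ) (S : Finset ℕ) (hm : m ∈ S) (r : ℕ) :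
    SA S (r + 1) = ⋃ j ∈ ((Finset.univ : Finset (Fin (r + 1))) : Set (Fin (r + 1))),
      (fun p : List PT × (Fin r → List PT) => j.insertNth (α := fun _ => List PT) p.1 p.2)
        '' SB m S r := by
  ext g
  simp only [SA, SB, Set.mem_ofPred_eq, Set.mem_iUnion, Set.mem_image, Prod.exists]
  constructor
  · intro h
    have hm' : m ∈ ∑ i, lab (g i) := by rw [h]; exact hm
    obtain ⟨j, -, hj⟩ := Multiset.mem_sum.1 hm'
    refine ⟨j, by simp, g j, j.removeNth g, ⟨hj, ?_⟩, by simp⟩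
    rw [← h, Fin.sum_univ_succAbove _ j]
    rfl
  · rintro ⟨j, -, f, g', ⟨-, h⟩, rfl⟩
    rw [Fin.sum_univ_succAbove _ j]
    simpa using h

theorem enumA (t : ℚ) (m : ℕ) (S : Finset ℕ) (hm : m ∈ S) (r : ℕ) (q : ℚ)
    (h : Enum (SB m S r) (wB t) q) : Enum (SA S (r + 1)) (wA t) ((r + 1 : ℕ) * q) := by
  rw [SA_eq m S hm r]
  have := Enum.biUnion (α := Fin (r + 1) → List PT) (Finset.univ : Finset (Fin (r + 1)))
    (s := fun j => (fun p : List PT × (Fin r → List PT) =>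
      j.insertNth (α := fun _ => List PT) p.1 p.2) '' SB m S r) (w := wA t) (q := q) ?_ ?_
  · simpa only [Finset.card_univ, Fintype.card_fin] using this
  · intro j _
    refine h.image _ _ ?_ ?_
    · rintro ⟨f, g⟩ _ ⟨f', g'⟩ _ hh
      have := Fin.insertNth_injective2 (α := fun _ => List PT) (p := j) hh
      exact Prod.ext this.1 this.2
    · rintro ⟨f, g⟩ _
      simp [wA, wB, Fin.sum_univ_succAbove _ j]
  · intro j _ j' _ hne
    rw [Function.onFun, Set.disjoint_left]
    rintro _ ⟨⟨f, g⟩, ⟨h1, h2⟩, rfl⟩ ⟨⟨f', g'⟩, ⟨h1', h2'⟩, hh⟩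
    simp only at hh h1 h1' h2
    obtain ⟨k, hk⟩ := Fin.exists_succAbove_eq hne.symm
    have e : g k = f' := by
      have := congrFun hh j'
      rw [Fin.insertNth_apply_same, ← hk, Fin.insertNth_apply_succAbove] at this
      exact this.symm
    have h3 : lab f + ∑ i, lab (g i) + 0 = S.val := by simpa using h2
    exact nodup_disj h3 h1 (Multiset.mem_sum.2 ⟨k, Finset.mem_univ _, e ▸ h1'⟩)

theorem SD_eq (m : ℕ) (S : Finset ℕ) (hm : m ∈ S) (k : ℕ) :
    SD m S k = (fun g : Fin (k + 1) → List PT => (m, g 0, Fin.tail (α := fun _ => List PT) g)) ''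
        SA (S.erase m) (k + 1) ∪
      ⋃ v ∈ ((S.erase m : Finset ℕ) : Set ℕ), (fun p : List PT × (Fin k → List PT) => (v, p)) ''
        SB m (S.erase v) k := by
  ext ⟨v, C, g⟩
  simp only [SA, SB, SD, Set.mem_ofPred_eq, Set.mem_iUnion, Set.mem_image, Prod.exists,
    Set.mem_union, Finset.erase_val, Prod.mk.injEq]
  constructor
  · rintro ⟨h1, h2⟩
    have h3 : lab C + ∑ i, lab (g i) = S.val.erase v := by
      rw [← h2]; simp
    by_cases hv : v = m
    · subst hv
      left
      refine ⟨Fin.cons C g, ?_, rfl, rfl, rfl⟩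
      rw [Fin.sum_univ_succ]
      simpa using h3
    · right
      have hvS : v ∈ S := by
        rw [← Finset.mem_val, ← h2]; simp
      refine ⟨v, by simp [hv, hvS], C, g, ⟨?_, h3⟩, rfl, rfl, rfl⟩
      rcases Multiset.mem_cons.1 h1 with h | h
      · exact absurd h.symm hv
      · exact h
  · rintro (⟨g', h, rfl, rfl, rfl⟩ | ⟨v', hv', C', g', ⟨h1, h2⟩, rfl, rfl, rfl⟩)
    · refine ⟨by simp, ?_⟩
      rw [Fin.sum_univ_succ] at h
      rw [Multiset.cons_add]
      simp only [Fin.tail]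
      rw [h]
      exact Multiset.cons_erase hm
    · refine ⟨by simp [h1], ?_⟩
      rw [Multiset.cons_add, h2]
      exact Multiset.cons_erase (Finset.mem_of_mem_erase (a := m) (Finset.mem_coe.1 hv'))

theorem enumD (t : ℚ) (m : ℕ) (S : Finset ℕ) (hm : m ∈ S) (hmin : ∀ b ∈ S, m ≤ b) (k : ℕ)
    (qA qB : ℚ) (hA : Enum (SA (S.erase m) (k + 1)) (wA t) qA)
    (hB : ∀ v ∈ S.erase m, Enum (SB m (S.erase v) k) (wB t) qB) :
    Enum (SD m S k) (wD t) (t * qA + ((S.erase m).card : ℚ) * qB) := by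
  rw [SD_eq m S hm k]
  refine Enum.union ?_ (Enum.biUnion (S.erase m) ?_ ?_) ?_
  · have hA' := hA.smul (w' := fun g => t * wA t g) t (fun _ _ => rfl)
    refine hA'.image _ _ ?_ ?_
    · intro g _ g' _ h
      simp only [Prod.mk.injEq, true_and] at h
      rw [← Fin.cons_self_tail g, ← Fin.cons_self_tail g', h.1, h.2]
    · intro g hg
      have : ∀ b ∈ lab (g 0), m ≤ b := by
        intro b hb
        apply hmin
        apply Finset.mem_of_mem_erase (a := m)
        rw [← Finset.mem_val, ← (show _ = _ from hg)]
        exact Multiset.mem_sum.2 ⟨0, Finset.mem_univ _, hb⟩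
      simp only [wD, wA, pv_node, if_pos this, Fin.sum_univ_succ, Fin.tail]
      ring
  · intro v hv
    refine (hB v hv).image _ _ ?_ ?_
    · intro p _ p' _ h
      simpa using h
    · rintro ⟨C, g⟩ ⟨h1, h2⟩
      have : ¬ ∀ b ∈ lab C, v ≤ b := by
        intro h
        have h3 := h m h1
        have h4 := hmin v (Finset.mem_of_mem_erase hv)
        exact Finset.ne_of_mem_erase hv (le_antisymm h3 h4)
      simp [wD, wB, pv_node, if_neg this]
  · intro v _ v' _ hne
    rw [Function.onFun, Set.disjoint_left]
    rintro _ ⟨p, _, rfl⟩ ⟨p', _, h⟩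
    simp only [Prod.mk.injEq] at h
    exact hne h.1.symm
  · rw [Set.disjoint_left]
    rintro _ ⟨g, _, rfl⟩ h
    simp only [Set.mem_iUnion, Set.mem_image] at h
    obtain ⟨v, hv, p, _, h⟩ := h
    simp only [Prod.mk.injEq] at h
    have := h.1
    subst this
    simp at hv

/-- Reassemble. -/
def phi {r : ℕ} (p : ℕ × List PT × (Fin (r + 2) → List PT)) : List PT × (Fin r → List PT) :=
  (p.2.2 0 ++ PT.node p.1 p.2.1 :: p.2.2 1, fun i => p.2.2 i.succ.succ)

theorem SB_eq (m : ℕ) (S : Finset ℕ) (r : ℕ) : SB m S r = phi '' SD m S (r + 2) := by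
  ext ⟨f, g⟩
  constructor
  · rintro ⟨h1, h2⟩
    obtain ⟨P, hP, hmP⟩ := mem_lab.1 h1
    obtain ⟨L, R, rfl⟩ := List.append_of_mem hP
    obtain ⟨v, C⟩ := P
    refine ⟨(v, C, Fin.cons L (Fin.cons R g)), ⟨?_, ?_⟩, ?_⟩
    · simpa [labels_node] using hmP
    · simp only [lab_append, lab_cons, labels_node] at h2
      rw [← h2]
      simp only [Fin.sum_univ_succ (n := r + 1), Fin.sum_univ_succ (n := r), Fin.cons_zero,
        Fin.cons_succ]
      abel
    · simp only [phi, Fin.cons_zero, Fin.cons_succ, Prod.mk.injEq, and_true]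
      rfl
  · rintro ⟨⟨v, C, h⟩, ⟨h1, h2⟩, h3⟩
    simp only [phi, Prod.mk.injEq] at h3
    obtain ⟨rfl, rfl⟩ := h3
    refine ⟨?_, ?_⟩
    · simp only [lab_append, lab_cons, labels_node]
      simp only [Multiset.mem_add]
      exact Or.inr (Or.inl h1)
    · simp only [lab_append, lab_cons, labels_node]
      simp only [Fin.sum_univ_succ (n := r + 1), Fin.sum_univ_succ (n := r)] at h2
      rw [← h2, Fin.succ_zero_eq_one]
      abel

theorem split_unique {m : ℕ} {P P' : PT} : ∀ {L L' R R' : List PT},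
    L ++ P :: R = L' ++ P' :: R' → m ∈ P.labels → m ∈ P'.labels →
    (lab (L ++ P :: R)).Nodup → L = L' ∧ P = P' ∧ R = R' := by
  intro L
  induction L with
  | nil =>
    intro L' R R' h hP hP' hn
    cases L' with
    | nil => simpa using h
    | cons a L' =>
      simp only [List.nil_append, List.cons_append, List.cons.injEq] at h
      obtain ⟨rfl, rfl⟩ := h
      exfalso
      simp only [List.nil_append, lab_cons, lab_append] at hn
      exact Multiset.disjoint_left.1 (Multiset.nodup_add.1 hn).2.2 hP (by simp [hP'])
  | cons b L ih =>
    intro L' R R' h hP hP' hn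
    cases L' with
    | nil =>
      simp only [List.nil_append, List.cons_append, List.cons.injEq] at h
      obtain ⟨rfl, rfl⟩ := h
      exfalso
      simp only [List.cons_append, lab_cons, lab_append] at hn
      exact Multiset.disjoint_left.1 (Multiset.nodup_add.1 hn).2.2 hP' (by simp [hP])
    | cons a L' =>
      simp only [List.cons_append, List.cons.injEq] at h
      obtain ⟨rfl, h⟩ := h
      simp only [List.cons_append] at hn
      rw [lab_cons] at hn
      obtain ⟨h1, h2, h3⟩ := ih h hP hP' (Multiset.nodup_add.1 hn).2.1
      exact ⟨by rw [h1], h2, h3⟩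

theorem enumB_of_D (t : ℚ) (m : ℕ) (S : Finset ℕ) (r : ℕ) (q : ℚ)
    (h : Enum (SD m S (r + 2)) (wD t) q) : Enum (SB m S r) (wB t) q := by
  rw [SB_eq]
  refine h.image _ _ ?_ ?_
  · rintro ⟨v, C, g⟩ hp ⟨v', C', g'⟩ hp' hh
    have hS : phi (v, C, g) ∈ SB m S r := by
      rw [SB_eq]; exact ⟨_, hp, rfl⟩
    have hn := (Multiset.nodup_add.1 (hS.2 ▸ S.nodup)).1
    simp only [phi, Prod.mk.injEq] at hh hn
    obtain ⟨h1, h2⟩ := hh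
    obtain ⟨e1, e2, e3⟩ := split_unique (m := m) h1 (by rw [labels_node]; exact hp.1)
      (by rw [labels_node]; exact hp'.1) hn
    simp only [PT.node.injEq] at e2
    obtain ⟨rfl, rfl⟩ := e2
    have : g = g' := by
      funext i
      refine Fin.cases e1 (fun i => ?_) i
      refine Fin.cases e3 (fun i => ?_) i
      exact congrFun h2 i
    rw [this]
  · rintro ⟨v, C, g⟩ _
    simp only [wB, wD, phi, pvPF_append, pvPF_cons, Fin.sum_univ_succ (n := r + 1),
      Fin.sum_univ_succ (n := r), Fin.succ_zero_eq_one]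
    congr 1
    ring

theorem Bf_succ (t : ℚ) (n r : ℕ) :
    Bf t (n + 1) r = ((r + 3 : ℕ) * t + ((n + 1 : ℕ) : ℚ)) * Bf t n (r + 2) := by
  unfold Bf
  rw [Finset.prod_range_succ']
  have : ∀ i ∈ Finset.range n, (((2 * (i + 1) + r + 3 : ℕ) : ℚ) * t + ((n + 1 - (i + 1) : ℕ) : ℚ))
      = ((2 * i + (r + 2) + 3 : ℕ) * t + ((n - i : ℕ) : ℚ)) := by
    intro i _
    rw [Nat.add_sub_add_right]
    congr 3
    ring
  rw [Finset.prod_congr rfl this]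
  simp only [Nat.mul_zero, Nat.zero_add, Nat.sub_zero]
  ring

theorem enumD_succ (t : ℚ) (n : ℕ) (k : ℕ) (q : ℚ)
    (ih : ∀ (m : ℕ) (S : Finset ℕ), m ∈ S → (∀ b ∈ S, m ≤ b) → S.card = n + 1 →
      Enum (SB m S k) (wB t) q)
    (m : ℕ) (S : Finset ℕ) (hm : m ∈ S) (hmin : ∀ b ∈ S, m ≤ b) (hS : S.card = n + 2) :
    Enum (SD m S k) (wD t) (((k + 1 : ℕ) * t + ((n + 1 : ℕ) : ℚ)) * q) := by
  have hc : (S.erase m).card = n + 1 := by rw [Finset.card_erase_of_mem hm, hS]; rfl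
  have hne : (S.erase m).Nonempty := Finset.card_pos.1 (by omega)
  have hA := enumA t _ _ (Finset.min'_mem _ hne) k q
    (ih _ _ (Finset.min'_mem _ hne) (fun b hb => Finset.min'_le _ _ hb) hc)
  have := enumD t m S hm hmin k _ q hA (fun v hv => ih m _
    (Finset.mem_erase.2 ⟨(Finset.ne_of_mem_erase hv).symm, hm⟩)
    (fun b hb => hmin b (Finset.mem_of_mem_erase hb))
    (by rw [Finset.card_erase_of_mem (Finset.mem_of_mem_erase hv), hS]; rfl))
  rw [hc] at this
  convert this using 1
  ring

theorem enumB (t : ℚ) (n : ℕ) : ∀ (r m : ℕ) (S : Finset ℕ), m ∈ S → (∀ b ∈ S, m ≤ b) →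
    S.card = n + 1 → Enum (SB m S r) (wB t) (Bf t n r) := by
  induction n with
  | zero =>
    intro r m S hm hmin hS
    apply enumB_of_D
    have he : S.erase m = ∅ := by
      rw [← Finset.card_eq_zero, Finset.card_erase_of_mem hm, hS]
    have := enumD t m S hm hmin (r + 2) 1 0 (by rw [he]; exact enumA_empty t _)
      (by rw [he]; simp)
    simpa [Bf] using this
  | succ n ih =>
    intro r m S hm hmin hS
    apply enumB_of_D
    rw [Bf_succ]
    exact enumD_succ t n (r + 2) _ (ih (r + 2)) m S hm hmin hS

theorem enumT (t : ℚ) (n : ℕ) (hn : 1 ≤ n) :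
    Enum {P : PT | P.labels = (Finset.Icc 1 (n + 1)).val} (fun P => t ^ P.pv)
      (t * ∏ i ∈ Finset.range n, ((2 * i + 1 : ℕ) * t + ((n - i : ℕ) : ℚ))) := by
  obtain ⟨n, rfl⟩ : ∃ k, n = k + 1 := ⟨n - 1, by omega⟩
  have hD := enumD_succ t n 0 _ (enumB t n 0) 1 (Finset.Icc 1 (n + 1 + 1)) (by simp)
    (fun b hb => (Finset.mem_Icc.1 hb).1) (by simp)
  have hI := hD.image (fun p => PT.node p.1 p.2.1) (fun P => t ^ P.pv) (by
      rintro ⟨v, C, g⟩ _ ⟨v', C', g'⟩ _ h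
      simp only [PT.node.injEq] at h
      obtain ⟨rfl, rfl⟩ := h
      rw [Subsingleton.elim g g']) (by
      rintro ⟨v, C, g⟩ _
      simp [wD])
  convert hI using 1
  · ext P
    constructor
    · intro h
      obtain ⟨v, C⟩ := P
      refine ⟨(v, C, fun _ => []), ⟨?_, ?_⟩, rfl⟩
      · rw [← labels_node, show _ = _ from h]; simp
      · rw [← labels_node, show _ = _ from h]; simp
    · rintro ⟨⟨v, C, g⟩, ⟨h1, h2⟩, rfl⟩
      simpa [labels_node] using h2
  · rw [Finset.prod_range_succ', Bf]
    have : ∀ i ∈ Finset.range n, (((2 * (i + 1) + 1 : ℕ) : ℚ) * t + ((n + 1 - (i + 1) : ℕ) : ℚ))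
        = ((2 * i + 0 + 3 : ℕ) * t + ((n - i : ℕ) : ℚ)) := by
      intro i _
      rw [Nat.add_sub_add_right]
      congr 3
    rw [Finset.prod_congr rfl this]
    simp only [Nat.mul_zero, Nat.zero_add, Nat.sub_zero]
    ring

/-- For `n ≥ 1`, `Σ_{P ∈ 𝒫_{n+1}} t^{pv(P)} = t · Π_{i=0}^{n-1} ((2i+1)·t + (n-i))`;
in particular (at `t = 1`) the number of plane trees on `[n+1]` is
`(n+1)! · C_n` where `C_n = (1/(n+1)) · binom(2n,n)` is the `n`-th Catalan number. -/
theorem planeTree_poly (n : ℕ) (hn : 1 ≤ n) :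
    (∀ t : ℚ, (∑ᶠ P : PTn (n + 1), t ^ P.1.pv) =
        t * ∏ i ∈ Finset.range n, ((2 * i + 1 : ℕ) * t + ((n - i : ℕ) : ℚ))) ∧
      (Nat.card (PTn (n + 1)) : ℚ) =
        (n + 1).factorial * ((1 : ℚ) / (n + 1)) * ((2 * n).choose n) := by
  have key : ∀ t : ℚ, (∑ᶠ P : PTn (n + 1), t ^ P.1.pv) =
        t * ∏ i ∈ Finset.range n, ((2 * i + 1 : ℕ) * t + ((n - i : ℕ) : ℚ)) := by
    intro t
    rw [← (enumT t n hn).2]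
    exact finsum_set_coe_eq_finsum_mem (f := fun P : PT => t ^ P.pv)
      {P : PT | P.labels = (Finset.Icc 1 (n + 1)).val}
  refine ⟨key, ?_⟩
  have h1 := key 1
  have hfin : Finite (PTn (n + 1)) := (enumT 1 n hn).1
  have : Fintype (PTn (n + 1)) := Fintype.ofFinite _
  rw [finsum_eq_sum_of_fintype] at h1
  simp only [one_pow, Finset.sum_const, Finset.card_univ, nsmul_eq_mul, mul_one, one_mul] at h1
  rw [Nat.card_eq_fintype_card, h1]
  have h2 : ∀ i ∈ Finset.range n, (((2 * i + 1 : ℕ) : ℚ) + ((n - i : ℕ) : ℚ))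
      = ((n + 1 + i : ℕ) : ℚ) := by
    intro i hi
    have := Finset.mem_range.1 hi
    rw [← Nat.cast_add]
    congr 1
    omega
  rw [Finset.prod_congr rfl h2, ← Nat.cast_prod, ← Nat.ascFactorial_eq_prod_range]
  have h3 : (n + 1).ascFactorial n = n.factorial * (2 * n).choose n := by
    rw [Nat.ascFactorial_eq_factorial_mul_choose, two_mul]
  rw [h3, Nat.factorial_succ]
  have : (n + 1 : ℚ) ≠ 0 := by positivity
  push_cast
  field_simp
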